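/- Let p be an odd prime with p > 3, let m be a primitive root modulo p, define x : ℕ → ℕ by x k = m^k % p, and set q̃ = (p-1)/2. Let q ≥ q̃ and N ≥ q̃ + 1 be natural numbers, and let Z be the real (q+1) × N matrix with entries Z (j, k) = x (k + j) for j ∈ {0, ..., q}, k ∈ {0, ..., N-1} (its columns are the lifted states z_k = (x_k, ..., x_{k+q})). Then the rank of Z equals q̃ + 1 = (p-1)/2 + 1. -/

import Mathlib

/-!
Write `h = (p - 1) / 2`. Since `m ^ h = -1` modulo `p`, the residues satisfy `x (k + h) + x k = p`,
so `x` solves a linear recurrence of order `h + 1`. The rank of a large enough Hankel matrix of a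
solution equals the order of the recurrence as soon as the first `h + 1` shifts of the solution are
linearly independent.

A linear relation between these shifts, multiplied by a Dirichlet character `χ` modulo `p` and
summed over a period, says that a polynomial of degree at most `h` vanishes at `χ⁻¹ m`, unless
`∑ a, χ a * a = 0`. This sum is positive for the trivial character, and for each of the `h` odd
characters it is a nonzero multiple of `L(1, χ⁻¹) ≠ 0`. Hence the polynomial has `h + 1` distinct
roots, so it is zero.
-/

section OddHurwitzZetaAtOne

open Complex HurwitzZeta Filter Topology
open scoped Real

lemma norm_cpow_neg_sub_cpow_neg_le {r c d : ℝ} (hr : 0 < r) (hc : r ≤ c) (hd : r ≤ d) {s : ℂ}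
    (hs : -1 ≤ s.re) :
    ‖(c : ℂ) ^ (-s) - (d : ℂ) ^ (-s)‖ ≤ ‖s‖ * r ^ (-s.re - 1) * |c - d| := by
  have hderiv (u : ℝ) (hu : u ∈ Set.Ici r) : HasDerivWithinAt (fun t : ℝ => (t : ℂ) ^ (-s))
      (-s * (u : ℂ) ^ (-s - 1)) (Set.Ici r) u := by
    have h := (hasDerivAt_id (u : ℂ)).cpow_const (c := -s)
      (ofReal_mem_slitPlane.2 (hr.trans_le hu))
    simpa using h.comp_ofReal.hasDerivWithinAt
  refine (convex_Ici r).norm_image_sub_le_of_norm_hasDerivWithin_le hderiv (fun u hu => ?_) hd hc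
  rw [norm_mul, norm_neg, norm_cpow_eq_rpow_re_of_pos (hr.trans_le hu)]
  gcongr
  simpa using Real.rpow_le_rpow_of_nonpos hr hu (by linarith : -s.re - 1 ≤ 0)

lemma norm_one_div_cpow_sub_one_div_cpow_le {a : ℝ} (ha : a ∈ Set.Ioo 0 1) {s : ℂ}
    (hs : -1 ≤ s.re) (n : ℕ) :
    ‖1 / (n + a : ℂ) ^ s - 1 / (n + 1 - a : ℂ) ^ s‖ ≤
      ‖s‖ * (min a (1 - a) ^ (-s.re - 1) * ((n + 1 : ℕ) : ℝ) ^ (-s.re - 1)) := by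
  have hδ : 0 < min a (1 - a) := lt_min ha.1 (sub_pos.2 ha.2)
  have hδa : min a (1 - a) ≤ a := min_le_left _ _
  have hδa' : min a (1 - a) ≤ 1 - a := min_le_right _ _
  have h := norm_cpow_neg_sub_cpow_neg_le (r := min a (1 - a) * (n + 1 : ℕ)) (c := n + a)
    (d := n + 1 - a) (by positivity) (by push_cast; nlinarith [n.cast_nonneg (α := ℝ)])
    (by push_cast; nlinarith [n.cast_nonneg (α := ℝ)]) hs
  have hdist : |(n + a : ℝ) - (n + 1 - a)| ≤ 1 := abs_le.2 ⟨by linarith [ha.1], by linarith [ha.2]⟩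
  rw [Real.mul_rpow hδ.le (by positivity)] at h
  simp only [one_div, ← cpow_neg]
  push_cast at h ⊢
  exact h.trans (mul_le_of_le_one_right (by positivity) hdist)

lemma norm_one_div_cpow_sub_one_div_cpow_le_of_mem_Icc {a : ℝ} (ha : a ∈ Set.Ioo 0 1) {t : ℝ}
    (ht : t ∈ Set.Icc 1 2) (n : ℕ) :
    ‖1 / (n + a : ℂ) ^ (t : ℂ) - 1 / (n + 1 - a : ℂ) ^ (t : ℂ)‖ ≤
      2 * (min a (1 - a) ^ (-3 : ℝ) * ((n + 1 : ℕ) : ℝ) ^ (-2 : ℝ)) := by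
  have hδ : 0 < min a (1 - a) := lt_min ha.1 (sub_pos.2 ha.2)
  have hδ1 : min a (1 - a) ≤ 1 := (min_le_left _ _).trans ha.2.le
  have ht0 : 0 ≤ t := zero_le_one.trans ht.1
  have h := norm_one_div_cpow_sub_one_div_cpow_le ha (s := t) (by rw [ofReal_re]; linarith) n
  rw [norm_real, Real.norm_of_nonneg ht0, ofReal_re] at h
  refine h.trans ?_
  gcongr ?_ * (?_ * ?_)
  · exact ht.2
  · exact Real.rpow_le_rpow_of_exponent_ge hδ hδ1 (by linarith [ht.2])
  · exact Real.rpow_le_rpow_of_exponent_le (by simp) (by linarith [ht.1])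

/-- Only the paired series converges absolutely at `s = 1`, outside the half-plane where it defines
`hurwitzZetaOdd`; the value is recovered by letting `s → 1⁺`. -/
lemma hasSum_nat_hurwitzZetaOdd_one {a : ℝ} (ha : a ∈ Set.Ioo 0 1) :
    HasSum (fun n : ℕ => (1 / (n + a : ℂ) - 1 / (n + 1 - a : ℂ)) / 2) (hurwitzZetaOdd a 1) := by
  let f (n : ℕ) (t : ℝ) : ℂ := (1 / (n + a : ℂ) ^ (t : ℂ) - 1 / (n + 1 - a : ℂ) ^ (t : ℂ)) / 2
  let bound (n : ℕ) : ℝ := min a (1 - a) ^ (-3 : ℝ) * ((n + 1 : ℕ) : ℝ) ^ (-2 : ℝ)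
  have hsummable : Summable bound :=
    ((summable_nat_add_iff 1).2 (Real.summable_nat_rpow.2 (by norm_num))).mul_left _
  have hbound (n : ℕ) (t : ℝ) (ht : t ∈ Set.Icc 1 2) : ‖f n t‖ ≤ bound n := by
    rw [norm_div, norm_ofNat, div_le_iff₀' two_pos]
    exact norm_one_div_cpow_sub_one_div_cpow_le_of_mem_Icc ha ht n
  have hcont (n : ℕ) : Continuous (f n) := by
    have h1 : (n + a : ℂ) ≠ 0 := by exact_mod_cast (by linarith [ha.1] : (0 : ℝ) < n + a).ne'
    have h2 : (n + 1 - a : ℂ) ≠ 0 := by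
      exact_mod_cast (by linarith [ha.2] : (0 : ℝ) < n + 1 - a).ne'
    simp only [f, one_div, ← cpow_neg]
    exact ((continuous_ofReal.neg.const_cpow (.inl h1)).sub
      (continuous_ofReal.neg.const_cpow (.inl h2))).div_const 2
  have hlim : Tendsto (fun t => ∑' n, f n t) (𝓝[>] 1) (𝓝 (∑' n, f n 1)) :=
    ((continuousOn_tsum (fun n => (hcont n).continuousOn) hsummable hbound).continuousWithinAt
      ⟨le_rfl, one_le_two⟩).mono_of_mem_nhdsWithin (Icc_mem_nhdsGT one_lt_two)
  have hlim' : Tendsto (fun t : ℝ => hurwitzZetaOdd a t) (𝓝[>] 1) (𝓝 (hurwitzZetaOdd a (1 : ℝ))) :=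
    ((differentiable_hurwitzZetaOdd a).continuous.comp continuous_ofReal).continuousWithinAt
  have heq : hurwitzZetaOdd a (1 : ℝ) = ∑' n, f n 1 := by
    refine tendsto_nhds_unique_of_eventuallyEq hlim' hlim ?_
    filter_upwards [self_mem_nhdsWithin] with t ht
    exact (hasSum_nat_hurwitzZetaOdd_of_mem_Icc (Set.Ioo_subset_Icc_self ha)
      (by simpa using ht)).tsum_eq.symm
  have h := (hsummable.of_norm_bounded fun n => hbound n 1 ⟨le_rfl, one_le_two⟩).hasSum
  rw [← heq] at h
  simpa [f] using h

lemma sum_range_one_div_add_sub_one_div {K : Type*} [Field K] (a : K) (M : ℕ) :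
    ∑ n ∈ Finset.range M, (1 / (n + a) - 1 / (n + 1 - a)) =
      1 / a - 1 / (M + a) + ∑ n ∈ Finset.range M, (1 / (a - (n + 1)) + 1 / (a + (n + 1))) := by
  induction M with
  | zero => simp
  | succ M ih =>
    have h : (1 : K) / (a - (M + 1)) = -(1 / (M + 1 - a)) := by
      rw [← neg_sub, div_neg]
    rw [Finset.sum_range_succ, Finset.sum_range_succ, ih, h]
    push_cast
    ring

theorem hurwitzZetaOdd_one {a : ℝ} (ha : a ∈ Set.Ioo 0 1) :
    hurwitzZetaOdd a 1 = π / 2 * cot (π * a) := by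
  have ha' : (a : ℂ) ∈ integerComplement := by
    rintro ⟨n, hn⟩
    have hn : (n : ℝ) = a := by exact_mod_cast hn
    have h0 : 0 < n := by exact_mod_cast hn ▸ ha.1
    have h1 : n < 1 := by exact_mod_cast hn ▸ ha.2
    omega
  have hinv : Tendsto (fun M : ℕ => 1 / (M + a : ℂ)) atTop (𝓝 0) := by
    simpa [Function.comp_def] using tendsto_inv₀_cobounded.comp
      ((tendsto_add_const_cobounded (a : ℂ)).comp (tendsto_natCast_atTop_cobounded (α := ℂ)))
  have h := (((tendsto_const_nhds (x := 1 / (a : ℂ))).sub hinv).add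
    (tendsto_logDeriv_euler_cot_sub ha')).div_const 2
  refine tendsto_nhds_unique (hasSum_nat_hurwitzZetaOdd_one ha).tendsto_sum_nat ?_
  simp only [← Finset.sum_div, sum_range_one_div_add_sub_one_div]
  convert h using 2
  ring

end OddHurwitzZetaAtOne

section OddLFunctionAtOne

open Complex HurwitzZeta ZMod
open scoped Real

lemma sum_range_mul_pow_mul_sub_one {R : Type*} [CommRing R] (ζ : R) (n : ℕ) :
    (∑ k ∈ Finset.range n, k * ζ ^ k) * (ζ - 1) =
      n * ζ ^ n - ζ * ∑ k ∈ Finset.range n, ζ ^ k := by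
  induction n with
  | zero => simp
  | succ n ih =>
    rw [Finset.sum_range_succ, Finset.sum_range_succ, add_mul, ih]
    push_cast
    ring

variable {N : ℕ} [NeZero N]

lemma sum_zmod_val_eq_sum_range {M : Type*} [AddCommMonoid M] (f : ℕ → M) :
    ∑ k : ZMod N, f k.val = ∑ k ∈ Finset.range N, f k := by
  obtain _ | N := N
  · exact absurd rfl (NeZero.ne 0)
  · exact Fin.sum_univ_eq_sum_range f (N + 1)

lemma stdAddChar_sub_one_ne_zero {j : ZMod N} (hj : j ≠ 0) :
    stdAddChar j - 1 ≠ 0 :=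
  sub_ne_zero.2 fun h => hj (injective_stdAddChar (h.trans (AddChar.map_zero_eq_one _).symm))

lemma sum_val_mul_stdAddChar {j : ZMod N} (hj : j ≠ 0) :
    ∑ k : ZMod N, k.val * stdAddChar (j * k) = N / (stdAddChar j - 1) := by
  have hne := stdAddChar_sub_one_ne_zero hj
  have hpow (k : ℕ) : stdAddChar j ^ k = stdAddChar (j * (k : ZMod N)) := by
    rw [← AddChar.map_nsmul_eq_pow, nsmul_eq_mul, mul_comm]
  have hN : stdAddChar j ^ N = 1 := by simp [hpow]
  have hgeom : ∑ k ∈ Finset.range N, stdAddChar j ^ k = 0 := by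
    simpa [hN, hne] using mul_geom_sum (stdAddChar j) N
  have h := sum_range_mul_pow_mul_sub_one (stdAddChar j) N
  rw [hgeom, hN, mul_zero, sub_zero, mul_one] at h
  rw [eq_div_iff hne, ← h, ← sum_zmod_val_eq_sum_range fun k => (k : ℂ) * stdAddChar j ^ k]
  simp only [hpow, natCast_val, cast_id]

lemma cot_pi_mul_val_div {j : ZMod N} (hj : j ≠ 0) :
    cot (π * (j.val / N : ℝ)) =
      I * (1 + 2 / N * ∑ k : ZMod N, k.val * stdAddChar (j * k)) := by
  have hN : (N : ℂ) ≠ 0 := NeZero.ne _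
  have hne := stdAddChar_sub_one_ne_zero hj
  have hexp : exp (2 * π * I * (j.val / N : ℝ)) = stdAddChar j := by
    rw [stdAddChar_apply, toCircle_apply]
    push_cast
    ring_nf
  rw [cot_pi_eq_exp_ratio, hexp, sum_val_mul_stdAddChar hj, ← neg_sub (stdAddChar j)]
  field_simp
  rw [I_sq]
  ring

lemma hurwitzZetaOdd_toAddCircle_one {j : ZMod N} (hj : j ≠ 0) :
    hurwitzZetaOdd (toAddCircle j) 1 =
      π / 2 * I * (1 + 2 / N * ∑ k : ZMod N, k.val * stdAddChar (j * k)) := by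
  have hpos : (0 : ℝ) < N := by exact_mod_cast NeZero.pos N
  have hval : (0 : ℝ) < j.val := by exact_mod_cast Nat.pos_of_ne_zero ((ZMod.val_ne_zero j).2 hj)
  have hmem : (j.val / N : ℝ) ∈ Set.Ioo 0 1 :=
    ⟨div_pos hval hpos, (div_lt_one hpos).2 (by exact_mod_cast j.val_lt)⟩
  rw [toAddCircle_apply, hurwitzZetaOdd_one hmem, cot_pi_mul_val_div hj, mul_assoc]

lemma sum_mul_sum_val_mul_stdAddChar {χ : DirichletCharacter ℂ N} (hχ : χ.IsPrimitive) :
    ∑ j, χ j * ∑ k : ZMod N, k.val * stdAddChar (j * k) =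
      gaussSum χ stdAddChar * ∑ k : ZMod N, χ⁻¹ k * k.val := by
  simp only [Finset.mul_sum]
  rw [Finset.sum_comm]
  refine Finset.sum_congr rfl fun k _ => ?_
  rw [← mul_assoc, mul_comm (gaussSum _ _), ← gaussSum_mulShift_of_isPrimitive _ hχ, gaussSum,
    Finset.sum_mul]
  refine Finset.sum_congr rfl fun j _ => ?_
  rw [AddChar.mulShift_apply, mul_comm j k, mul_left_comm, mul_comm]

theorem LFunction_apply_one_of_odd {χ : DirichletCharacter ℂ N} (hχ : χ.IsPrimitive)
    (hodd : χ.Odd) :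
    χ.LFunction 1 = π * I * gaussSum χ stdAddChar / N ^ 2 * ∑ k : ZMod N, χ⁻¹ k * k.val := by
  have hterm (j : ZMod N) : χ j * hurwitzZetaOdd (toAddCircle j) 1 =
      π / 2 * I * (χ j + 2 / N * (χ j * ∑ k : ZMod N, k.val * stdAddChar (j * k))) := by
    rcases eq_or_ne j 0 with rfl | hj
    · simp [hodd.to_fun.map_zero]
    · rw [hurwitzZetaOdd_toAddCircle_one hj]
      ring
  calc χ.LFunction 1 = (N : ℂ)⁻¹ * ∑ j, χ j * hurwitzZetaOdd (toAddCircle j) 1 := by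
        rw [DirichletCharacter.LFunction, ZMod.LFunction_def_odd hodd.to_fun, cpow_neg_one]
    _ = (N : ℂ)⁻¹ * (π / 2 * I * (∑ j, χ j +
          2 / N * ∑ j, χ j * ∑ k : ZMod N, k.val * stdAddChar (j * k))) := by
        simp only [hterm, ← Finset.mul_sum, Finset.sum_add_distrib]
    _ = π * I * gaussSum χ stdAddChar / N ^ 2 * ∑ k : ZMod N, χ⁻¹ k * k.val := by
        rw [hodd.to_fun.sum_eq_zero, sum_mul_sum_val_mul_stdAddChar hχ]
        ring

end OddLFunctionAtOne

section DirichletCharacterMoments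

lemma dirichletCharacter_ne_one_of_odd {R : Type*} [CommRing R] [NeZero (2 : R)] {n : ℕ}
    {χ : DirichletCharacter R n} (hodd : χ.Odd) : χ ≠ 1 := by
  rintro rfl
  exact DirichletCharacter.Odd.not_even _ hodd (MulChar.one_apply isUnit_one.neg)

lemma dirichletCharacter_isPrimitive_of_ne_one {R : Type*} [CommMonoidWithZero R] {p : ℕ}
    (hp : p.Prime) {χ : DirichletCharacter R p} (hχ : χ ≠ 1) : χ.IsPrimitive := by
  have : NeZero p := ⟨hp.ne_zero⟩
  exact ((Nat.dvd_prime hp).1 χ.conductor_dvd_level).resolve_left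
    (mt DirichletCharacter.eq_one_iff_conductor_eq_one.2 hχ)

theorem sum_mul_val_ne_zero_of_odd {N : ℕ} [NeZero N] {χ : DirichletCharacter ℂ N}
    (hχ : χ.IsPrimitive) (hodd : χ.Odd) : ∑ k : ZMod N, χ k * k.val ≠ 0 := by
  have hprim : χ⁻¹.IsPrimitive := χ.conductor_inv.trans hχ
  have hodd' : χ⁻¹.Odd := by
    rw [DirichletCharacter.Odd, MulChar.inv_apply_eq_inv', hodd, inv_neg_one]
  have hL : χ⁻¹.LFunction 1 ≠ 0 :=
    DirichletCharacter.LFunction_apply_one_ne_zero (dirichletCharacter_ne_one_of_odd hodd')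
  rw [LFunction_apply_one_of_odd hprim hodd', inv_inv] at hL
  exact right_ne_zero_of_mul hL

lemma sum_one_mul_val_ne_zero {N : ℕ} [NeZero N] (hN : 1 < N) :
    ∑ k : ZMod N, (1 : DirichletCharacter ℂ N) k * k.val ≠ 0 := by
  classical
  have : Fact (1 < N) := ⟨hN⟩
  have hcast (k : ZMod N) : (1 : DirichletCharacter ℂ N) k * k.val =
      ((if IsUnit k then k.val else 0 : ℕ) : ℂ) := by
    split_ifs with hk
    · rw [MulChar.one_apply hk, one_mul]
    · rw [MulChar.map_nonunit _ hk, zero_mul, Nat.cast_zero]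
  simp only [hcast, ← Nat.cast_sum]
  exact_mod_cast (Finset.sum_pos' (fun _ _ => Nat.zero_le _)
    ⟨1, Finset.mem_univ _, by simp [ZMod.val_one]⟩).ne'

theorem exists_odd_dirichletCharacter_orderOf_eq {p : ℕ} [Fact p.Prime] (hp : p ≠ 2) :
    ∃ ω : DirichletCharacter ℂ p, ω.Odd ∧ orderOf ω = p - 1 := by
  have hp3 : 3 ≤ p := (Fact.out : p.Prime).two_le.lt_of_ne' hp
  obtain ⟨ω, hω⟩ := MulChar.exists_mulChar_orderOf (ZMod p) (n := p - 1) (by rw [ZMod.card])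
    (Complex.isPrimitiveRoot_exp (p - 1) (by omega))
  refine ⟨ω, (DirichletCharacter.even_or_odd ω).resolve_left fun heven => ?_, hω⟩
  have hpow : ω ^ (p / 2) = 1 := by
    ext u
    rw [MulChar.pow_apply_coe, ← map_pow, MulChar.one_apply_coe]
    rcases ZMod.pow_div_two_eq_neg_one_or_one p u.ne_zero with h | h
    · rw [h, map_one]
    · rw [h, heven]
  have := Nat.le_of_dvd (by omega) (hω ▸ orderOf_dvd_of_pow_eq_one hpow)
  omega

theorem exists_injective_sum_mul_val_ne_zero {p : ℕ} [Fact p.Prime] (hp : p ≠ 2) :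
    ∃ χ : Fin (p / 2 + 1) → DirichletCharacter ℂ p,
      Function.Injective χ ∧ ∀ i, ∑ k : ZMod p, χ i k * k.val ≠ 0 := by
  have hprime : p.Prime := Fact.out
  have hp_odd : p % 2 = 1 := hprime.mod_two_eq_one_iff_ne_two.2 hp
  obtain ⟨ω, hω, hord⟩ := exists_odd_dirichletCharacter_orderOf_eq hp
  have hωpow (i : ℕ) : (ω ^ (2 * i + 1)).Odd := by
    rw [DirichletCharacter.Odd, MulChar.pow_apply' _ (by omega), hω, Odd.neg_one_pow ⟨i, rfl⟩]
  have hne (i : ℕ) : ω ^ (2 * i + 1) ≠ 1 := dirichletCharacter_ne_one_of_odd (hωpow i)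
  refine ⟨Fin.cons 1 fun i => ω ^ (2 * (i : ℕ) + 1), Fin.cons_injective_iff.2 ⟨?_, ?_⟩,
    Fin.cases ?_ fun i => ?_⟩
  · rintro ⟨i, hi⟩
    exact hne i hi
  · intro i j hij
    have h := pow_injOn_Iio_orderOf (Set.mem_Iio.2 (by omega)) (Set.mem_Iio.2 (by omega)) hij
    omega
  · exact sum_one_mul_val_ne_zero hprime.one_lt
  · exact sum_mul_val_ne_zero_of_odd (dirichletCharacter_isPrimitive_of_ne_one hprime (hne i))
      (hωpow i)

end DirichletCharacterMoments

section ShiftsAndHankelMatrices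

lemma sum_mulChar_mul_comp_mul_right {R K : Type*} [CommMonoid R] [Fintype R] [CommRing K]
    (χ : MulChar R K) (f : R → K) (u : Rˣ) :
    ∑ x, χ x * f (x * u) = χ⁻¹ u * ∑ x, χ x * f x := by
  have hinv : χ⁻¹ u * χ u = 1 := by
    rw [← MulChar.mul_apply, inv_mul_cancel, MulChar.one_apply_coe]
  rw [← Equiv.sum_comp u.mulRight fun x => χ x * f x]
  simp only [Units.mulRight_apply, map_mul, mul_assoc, mul_left_comm _ (χ u)]
  rw [← Finset.mul_sum, ← mul_assoc, hinv, one_mul]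

theorem linearIndependent_shift_of_sum_mulChar_mul_ne_zero {R K : Type*} [CommMonoid R]
    [Fintype R] [CommRing K] [IsDomain K] {d : ℕ} {g : Rˣ} (hg : ∀ x, x ∈ Subgroup.zpowers g)
    {f : R → K} {χ : Fin d → MulChar R K} (hχ : Function.Injective χ)
    (hf : ∀ i, ∑ x, χ i x * f x ≠ 0) :
    LinearIndependent K fun (j : Fin d) (k : ℕ) => f (g ^ (k + j : ℕ)) := by
  rw [Fintype.linearIndependent_iff]
  intro v hv
  have hunit (u : Rˣ) : ∑ j, v j * f (u * g ^ (j : ℕ)) = 0 := by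
    obtain ⟨k, rfl⟩ := Submonoid.mem_powers_iff _ _ |>.1 (mem_powers_iff_mem_zpowers.2 (hg u))
    simpa [pow_add] using congr_fun hv k
  refine congr_fun (Matrix.eq_zero_of_forall_index_sum_mul_pow_eq_zero
    (f := fun i => (χ i)⁻¹ g) (fun i i' h => hχ (inv_injective ((MulChar.eq_iff hg _ _).2 h)))
    fun i => ?_)
  refine (mul_eq_zero.1 ?_).resolve_right (hf i)
  calc (∑ j, v j * (χ i)⁻¹ g ^ (j : ℕ)) * ∑ x, χ i x * f x
      = ∑ j, v j * ∑ x, χ i x * f (x * g ^ (j : ℕ)) := by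
        rw [Finset.sum_mul]
        refine Finset.sum_congr rfl fun j _ => ?_
        rw [← Units.val_pow_eq_pow_val, sum_mulChar_mul_comp_mul_right, Units.val_pow_eq_pow_val,
          map_pow, mul_assoc]
    _ = ∑ x, χ i x * ∑ j, v j * f (x * g ^ (j : ℕ)) := by
        simp only [Finset.mul_sum]
        rw [Finset.sum_comm]
        simp only [mul_left_comm]
    _ = 0 := Finset.sum_eq_zero fun x _ => by
        by_cases hx : IsUnit x
        · obtain ⟨u, rfl⟩ := hx
          rw [hunit, mul_zero]
        · rw [MulChar.map_nonunit _ hx, zero_mul]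

theorem rank_hankel_of_isSolution {K : Type*} [Field K] {E : LinearRecurrence K} {u : ℕ → K}
    (hu : E.IsSolution u) (hind : LinearIndependent K fun (j : Fin E.order) (k : ℕ) => u (k + j))
    {a b : ℕ} (ha : E.order ≤ a) (hb : E.order ≤ b) :
    (Matrix.of fun (i : Fin a) (k : Fin b) => u (k + i)).rank = E.order := by
  let T : E.solSpace →ₗ[K] Fin b → K :=
    (LinearMap.funLeft K K (Fin.val : Fin b → ℕ)).comp E.solSpace.subtype
  have hT : Function.Injective T := fun v w h => E.toInit.injective <| funext fun i =>
    congr_fun h (Fin.castLE hb i)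
  let s (i : ℕ) : E.solSpace := ⟨fun k => u (k + i), fun k => by
    simpa only [add_right_comm] using hu (k + i)⟩
  have hfin : Module.Finite K E.solSpace := .of_basis E.basis
  have hrank : Module.finrank K E.solSpace = E.order := by
    simp [Module.finrank_eq_card_basis E.basis]
  have hspan : Submodule.span K (Set.range fun i : Fin a => s i) = ⊤ := by
    have hs : LinearIndependent K fun j : Fin E.order => s j := .of_comp E.solSpace.subtype hind
    refine top_unique ((hs.span_eq_top_of_card_eq_finrank' (by simp [hrank])).ge.trans
      (Submodule.span_mono ?_))
    rintro _ ⟨j, rfl⟩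
    exact ⟨Fin.castLE ha j, rfl⟩
  have hrow : (Matrix.of fun (i : Fin a) (k : Fin b) => u (k + i)).row =
      T ∘ fun i : Fin a => s i := rfl
  rw [Matrix.rank_eq_finrank_span_row, hrow, Set.range_comp, ← Submodule.map_span, hspan,
    ← LinearMap.range_eq_map, LinearMap.finrank_range_of_inj hT, hrank]

lemma linearIndependent_of_linearIndependent_algebraMap {K L ι κ : Type*} [CommRing K]
    [CommRing L] [Algebra K L] [FaithfulSMul K L] {v : ι → κ → K}
    (hv : LinearIndependent L fun i k => algebraMap K L (v i k)) : LinearIndependent K v :=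
  .of_comp ((Algebra.linearMap K L).compLeft κ) (hv.restrict_scalars' K)

/-- The recurrence `u (n + h + 1) = u n - u (n + 1) + u (n + h)`, that is
`(T - 1) (T ^ h + 1) u = 0` for the shift operator `T`: it encodes `u (n + h) + u n` being
constant in `n`. For `h = 0` the index `1 : Fin 1` is `0`, and the recurrence reads
`u (n + 1) = u n` instead. -/
def halfPeriodRecurrence (R : Type*) [CommRing R] (h : ℕ) : LinearRecurrence R where
  order := h + 1
  coeffs := Pi.single 0 1 - Pi.single 1 1 + Pi.single (Fin.last h) 1

lemma isSolution_halfPeriodRecurrence {R : Type*} [CommRing R] {h : ℕ} (h0 : h ≠ 0) {u : ℕ → R}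
    {c : R} (hu : ∀ n, u (n + h) + u n = c) : (halfPeriodRecurrence R h).IsSolution u := by
  obtain ⟨h, rfl⟩ := Nat.exists_eq_succ_of_ne_zero h0
  intro n
  have hsucc : u (n + (h + 2)) + u (n + 1) = c := by
    rw [← hu (n + 1), add_right_comm, add_assoc]
  calc u (n + (h + 2)) = u n - u (n + 1) + u (n + (h + 1)) := by linear_combination hsucc - hu n
    _ = ∑ i : Fin (h + 2), (halfPeriodRecurrence R (h + 1)).coeffs i * u (n + i) := by
      simp [halfPeriodRecurrence, add_mul, sub_mul, Finset.sum_add_distrib,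
        Finset.sum_sub_distrib, Pi.single_apply]

end ShiftsAndHankelMatrices

section PowerResidues

lemma exists_unit_generator {M : Type*} [Monoid M] [Finite Mˣ] {a : M}
    (ha : orderOf a = Nat.card Mˣ) : ∃ g : Mˣ, g = a ∧ ∀ x, x ∈ Subgroup.zpowers g := by
  obtain ⟨g, rfl⟩ := (orderOf_pos_iff.1 (ha ▸ Nat.card_pos)).isUnit
  have htop : Subgroup.zpowers g = ⊤ :=
    Subgroup.eq_top_of_card_eq _ (by rw [Nat.card_zpowers, ← orderOf_units, ha])
  exact ⟨g, rfl, fun x => htop ▸ Subgroup.mem_top x⟩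

lemma pow_eq_neg_one_of_orderOf_eq {R : Type*} [CommRing R] [NoZeroDivisors R] {a : R} {h : ℕ}
    (h0 : h ≠ 0) (ha : orderOf a = h * 2) : a ^ h = -1 :=
  ((IsPrimitiveRoot.orderOf a).pow (by omega) ha).eq_neg_one_of_two_right

lemma pow_mod_add_pow_mod_eq {N m h : ℕ} (hN : 1 < N) (h0 : h ≠ 0) (hm : (m : ZMod N) ^ h = -1)
    (k : ℕ) : m ^ (k + h) % N + m ^ k % N = N := by
  have : Fact (1 < N) := ⟨hN⟩
  have hunit : IsUnit (m : ZMod N) := (isUnit_pow_iff h0).1 (hm ▸ isUnit_one.neg)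
  have : NeZero ((m : ZMod N) ^ k) := ⟨(hunit.pow k).ne_zero⟩
  have hval (j : ℕ) : m ^ j % N = ((m : ZMod N) ^ j).val := by
    rw [← Nat.cast_pow, ZMod.val_natCast]
  rw [hval, hval, pow_add, hm, mul_neg_one, ZMod.val_neg_of_ne_zero,
    Nat.sub_add_cancel (ZMod.val_le _)]

theorem linearIndependent_shift_pow_mod {p m : ℕ} [Fact p.Prime] (hp : p ≠ 2)
    (hm : orderOf (m : ZMod p) = p - 1) :
    LinearIndependent ℝ fun (j : Fin (p / 2 + 1)) (k : ℕ) =>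
      ((m ^ (k + j : ℕ) % p : ℕ) : ℝ) := by
  obtain ⟨g, hgm, hg⟩ := exists_unit_generator (a := (m : ZMod p))
    (by rw [hm, Nat.card_eq_fintype_card, ZMod.card_units])
  obtain ⟨χ, hχ, hsum⟩ := exists_injective_sum_mul_val_ne_zero hp
  have hval (k : ℕ) : ((m ^ k % p : ℕ) : ℂ) = ((g ^ k : ZMod p).val : ℂ) := by
    rw [hgm, ← Nat.cast_pow, ZMod.val_natCast]
  refine linearIndependent_of_linearIndependent_algebraMap (L := ℂ) ?_
  simpa only [map_natCast, hval] using
    linearIndependent_shift_of_sum_mulChar_mul_ne_zero hg hχ hsum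

end PowerResidues

/-- **Full rank of the EDMD data matrix for Diffie–Hellman.**
Let `p` be an odd prime with `p > 3`, `m` a primitive root modulo `p`,
`x k = m ^ k % p`, and `q̃ = (p-1)/2`. For `q ≥ q̃` and `N ≥ q̃ + 1`, the real
`(q+1) × N` matrix `Z` with entries `Z j k = x (k + j)` (whose columns are the
lifted states `z_k = (x_k, ..., x_{k+q})`) satisfies `rank Z = q̃ + 1`. -/
theorem dh_data_matrix_rank (p m q N : ℕ) (hp : p.Prime) (hp3 : 3 < p)
    (hm : orderOf (m : ZMod p) = p - 1)
    (hq : (p - 1) / 2 ≤ q) (hN : (p - 1) / 2 + 1 ≤ N) :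
    (Matrix.of (fun (j : Fin (q + 1)) (k : Fin N) =>
      ((m ^ ((k : ℕ) + (j : ℕ)) % p : ℕ) : ℝ))).rank = (p - 1) / 2 + 1 := by
  have : Fact p.Prime := ⟨hp⟩
  have hp_odd : p % 2 = 1 := hp.mod_two_eq_one_iff_ne_two.2 (by omega)
  have hhalf : (p - 1) / 2 = p / 2 := by omega
  have h0 : p / 2 ≠ 0 := by omega
  have hneg : (m : ZMod p) ^ (p / 2) = -1 := pow_eq_neg_one_of_orderOf_eq h0 (by omega)
  have hsol : (halfPeriodRecurrence ℝ (p / 2)).IsSolution fun k => ((m ^ k % p : ℕ) : ℝ) :=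
    isSolution_halfPeriodRecurrence h0 (c := p) fun k => by
      exact_mod_cast pow_mod_add_pow_mod_eq hp.one_lt h0 hneg k
  rw [hhalf] at hq hN ⊢
  exact rank_hankel_of_isSolution hsol (linearIndependent_shift_pow_mod (by omega) hm)
    (Nat.succ_le_succ hq) hN
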